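/- (Theorem 5: privacy of region-adaptive pixelization) Let M = G_R·b, N = G_C·b, b = n·s_b with n ≥ 1, m ≥ 1, ε > 0, and partition the grid index set into simple grids 𝒮 and complex grids 𝒞, with each complex grid subdivided into n² subgrids of size s_b×s_b. Define the mechanism that, for an image I with values in [0,255], outputs μ_{r,c}(I) + η_{r,c} for each simple grid with η_{r,c} independent Laplace of scale σ = 255·m/(b²·ε), and ν_{r,c,u,v}(I) + η_{r,c,u,v} for each subgrid of each complex grid with η_{r,c,u,v} independent Laplace of scale σ_s = 255·m/(s_b²·ε), all noises mutually independent (so the output distribution μ_I is the corresponding product of translated Laplace measures). Then for any two images I₁, I₂ with values in [0,255] differing at at most m positions and every measurable set S of the output space, μ_{I₁}(S) ≤ exp(ε) · μ_{I₂}(S); i.e., the entire region-adaptive process satisfies ε-differential privacy. -/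

import Mathlib

/-!
Translating a Laplace measure of scale `σ` from `a` to `a'` changes its density by a factor of at
most `exp (|a - a'| / σ)`, so on a product of such measures the exponents add up. A cell mean
over `k` pixels carries noise of scale `255 * m / (k * ε)`: the cell size cancels, and every cell
contributes at most `ε / (255 * m)` times the `ℓ¹` distance of the two images on it. The cells are
disjoint, hence the total exponent is at most `ε / (255 * m)` times the `ℓ¹` distance of the images,
which is itself at most `255 * m`.
-/

open MeasureTheory

/-- The Laplace measure with scale `σ` on `ℝ`. -/
noncomputable def laplaceMeasure (σ : ℝ) : Measure ℝ :=
  volume.withDensity (fun t => ENNReal.ofReal ((1 / (2 * σ)) * Real.exp (-|t| / σ)))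

/-- The `b×b` grid with index `(r,c)`, where `b = n·s_b`. -/
def grid (G_R G_C b : ℕ) (rc : Fin G_R × Fin G_C) :
    Finset (Fin (G_R * b) × Fin (G_C * b)) :=
  Finset.univ.filter (fun p =>
    rc.1.val * b ≤ p.1.val ∧ p.1.val < (rc.1.val + 1) * b ∧
    rc.2.val * b ≤ p.2.val ∧ p.2.val < (rc.2.val + 1) * b)

/-- The grid mean `μ_{r,c}(I) = (1/b²) · ∑_{(i,j) ∈ G_{r,c}} I(i,j)`. -/
noncomputable def gridMean (G_R G_C b : ℕ) (I : Fin (G_R * b) × Fin (G_C * b) → ℝ)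
    (rc : Fin G_R × Fin G_C) : ℝ :=
  (1 / (b : ℝ) ^ 2) * ∑ p ∈ grid G_R G_C b rc, I p

/-- With `b = n·s_b`, the `s_b×s_b` subgrid of the grid `(r,c)` indexed by
`(u,v) ∈ Fin n × Fin n`. -/
def subgrid (G_R G_C n s_b : ℕ) (rc : Fin G_R × Fin G_C) (uv : Fin n × Fin n) :
    Finset (Fin (G_R * (n * s_b)) × Fin (G_C * (n * s_b))) :=
  Finset.univ.filter (fun p =>
    rc.1.val * (n * s_b) + uv.1.val * s_b ≤ p.1.val ∧
    p.1.val < rc.1.val * (n * s_b) + (uv.1.val + 1) * s_b ∧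
    rc.2.val * (n * s_b) + uv.2.val * s_b ≤ p.2.val ∧
    p.2.val < rc.2.val * (n * s_b) + (uv.2.val + 1) * s_b)

/-- The subgrid mean `ν_{r,c,u,v}(I) = (1/s_b²) · ∑` of `I` over the subgrid. -/
noncomputable def subgridMean (G_R G_C n s_b : ℕ)
    (I : Fin (G_R * (n * s_b)) × Fin (G_C * (n * s_b)) → ℝ)
    (rc : Fin G_R × Fin G_C) (uv : Fin n × Fin n) : ℝ :=
  (1 / (s_b : ℝ) ^ 2) * ∑ p ∈ subgrid G_R G_C n s_b rc uv, I p

/-- Output distribution of the region-adaptive mechanism: one independently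
noised value `μ_{r,c}(I) + Laplace(σ)` for each simple grid, and one value
`ν_{r,c,u,v}(I) + Laplace(σ_s)` for each subgrid of each complex grid; the joint
distribution is the product of the translated Laplace measures. -/
noncomputable def regionAdaptiveMech (G_R G_C n s_b : ℕ) (σ σs : ℝ)
    (simple complex : Finset (Fin G_R × Fin G_C))
    (I : Fin (G_R * (n * s_b)) × Fin (G_C * (n * s_b)) → ℝ) :
    Measure (({rc // rc ∈ simple} ⊕ ({rc // rc ∈ complex} × (Fin n × Fin n))) → ℝ) :=
  Measure.pi fun i =>
    Sum.elim
      (fun rc : {rc // rc ∈ simple} =>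
        (laplaceMeasure σ).map (fun η => gridMean G_R G_C (n * s_b) I rc.1 + η))
      (fun x : {rc // rc ∈ complex} × (Fin n × Fin n) =>
        (laplaceMeasure σs).map (fun η => subgridMean G_R G_C n s_b I x.1.1 x.2 + η)) i

section ProductMeasure

variable {ι : Type*} [Fintype ι] {α : ι → Type*} [∀ i, MeasurableSpace (α i)]

-- `Measure.pi` comes from the largest outer measure bounded on boxes by the product of the sides,
-- so boxes suffice.
lemma measure_pi_mono {μ ν : ∀ i, Measure (α i)} (h : ∀ i, μ i ≤ ν i) :
    Measure.pi μ ≤ Measure.pi ν := by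
  refine Measure.le_iff.2 fun S hS => ?_
  rw [Measure.pi, Measure.pi, toMeasure_apply _ _ hS, toMeasure_apply _ _ hS]
  refine OuterMeasure.le_pi.2 (fun s _ => ?_) S
  exact (OuterMeasure.pi_pi_le _ s).trans (Finset.prod_le_prod' fun i _ => h i (s i))

lemma measure_pi_smul (c : ι → NNReal) (μ : ∀ i, Measure (α i)) [∀ i, SigmaFinite (μ i)] :
    Measure.pi (fun i => c i • μ i) = (∏ i, c i) • Measure.pi μ := by
  refine Measure.pi_eq fun s _ => ?_
  simp only [Measure.smul_apply, Measure.pi_pi, ENNReal.smul_def, smul_eq_mul,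
    Finset.prod_mul_distrib, ENNReal.ofNNReal_finsetProd]

end ProductMeasure

section Laplace

instance sigmaFinite_laplaceMeasure (σ : ℝ) : SigmaFinite (laplaceMeasure σ) := by
  unfold laplaceMeasure
  infer_instance

lemma laplaceMeasure_map_const_add (σ a : ℝ) :
    (laplaceMeasure σ).map (fun η => a + η) = volume.withDensity
      (fun t => ENNReal.ofReal ((1 / (2 * σ)) * Real.exp (-|t - a| / σ))) := by
  ext s hs
  rw [Measure.map_apply (measurable_const_add a) hs, laplaceMeasure,
    withDensity_apply _ (measurable_const_add a hs), withDensity_apply _ hs]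
  simpa only [add_sub_cancel_left] using
    (measurePreserving_add_left volume a).setLIntegral_comp_preimage_emb
      (measurableEmbedding_addLeft a)
      (fun t => ENNReal.ofReal ((1 / (2 * σ)) * Real.exp (-|t - a| / σ))) s

lemma exp_neg_abs_sub_div_le {σ : ℝ} (hσ : 0 < σ) (a a' t : ℝ) :
    Real.exp (-|t - a| / σ) ≤ Real.exp (|a - a'| / σ) * Real.exp (-|t - a'| / σ) := by
  rw [← Real.exp_add, ← add_div]
  gcongr
  linarith [abs_sub_le t a a']

lemma laplaceMeasure_map_const_add_le {σ : ℝ} (hσ : 0 < σ) (a a' : ℝ) :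
    (laplaceMeasure σ).map (fun η => a + η) ≤
      (Real.exp (|a - a'| / σ)).toNNReal • (laplaceMeasure σ).map (fun η => a' + η) := by
  rw [laplaceMeasure_map_const_add, laplaceMeasure_map_const_add, ENNReal.smul_def,
    ← withDensity_smul' _ _ ENNReal.coe_ne_top]
  refine withDensity_mono (ae_of_all _ fun t => ?_)
  simp only [Pi.smul_apply, smul_eq_mul]
  rw [← ENNReal.ofReal, ← ENNReal.ofReal_mul (Real.exp_nonneg _), mul_left_comm]
  gcongr
  exact exp_neg_abs_sub_div_le hσ a a' t

variable {ι : Type*} [Fintype ι]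

/-- The Laplace mechanism: the distribution of the vector `a` perturbed by independent Laplace
noise, of scale `σ i` in coordinate `i`. -/
noncomputable def laplaceMech (σ a : ι → ℝ) : Measure (ι → ℝ) :=
  Measure.pi fun i => (laplaceMeasure (σ i)).map (fun η => a i + η)

lemma laplaceMech_le {σ a a' : ι → ℝ} (hσ : ∀ i, 0 < σ i) {ε : ℝ}
    (h : ∑ i, |a i - a' i| / σ i ≤ ε) :
    laplaceMech σ a ≤ ENNReal.ofReal (Real.exp ε) • laplaceMech σ a' := by
  have : ∀ i, SigmaFinite ((laplaceMeasure (σ i)).map (fun η => a' i + η)) :=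
    fun i => (MeasurableEquiv.addLeft (a' i)).sigmaFinite_map
  calc laplaceMech σ a
      ≤ Measure.pi fun i => (Real.exp (|a i - a' i| / σ i)).toNNReal •
          (laplaceMeasure (σ i)).map (fun η => a' i + η) :=
        measure_pi_mono fun i => laplaceMeasure_map_const_add_le (hσ i) (a i) (a' i)
    _ = (∏ i, (Real.exp (|a i - a' i| / σ i)).toNNReal) • laplaceMech σ a' :=
        measure_pi_smul _ _
    _ = ENNReal.ofReal (Real.exp (∑ i, |a i - a' i| / σ i)) • laplaceMech σ a' := by
        rw [Real.exp_sum, ENNReal.ofReal, Real.toNNReal_prod_of_nonneg fun i _ => Real.exp_nonneg _,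
          ENNReal.smul_def]
    _ ≤ ENNReal.ofReal (Real.exp ε) • laplaceMech σ a' := by gcongr

end Laplace

section WeightedSums

open scoped Function

variable {ι P : Type*} [Fintype ι] [Fintype P]

lemma sum_sum_le_of_pairwise_disjoint {M : Type*} [AddCommMonoid M] [PartialOrder M]
    [IsOrderedAddMonoid M] {s : ι → Finset P} (hs : Pairwise (Disjoint on s)) {f : P → M}
    (hf : ∀ p, 0 ≤ f p) :
    ∑ i, ∑ p ∈ s i, f p ≤ ∑ p, f p := by
  classical
  rw [← Finset.sum_biUnion fun i _ j _ hij => hs hij]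
  exact Finset.sum_le_univ_sum_of_nonneg hf

lemma laplaceMech_weightedSum_le {s : ι → Finset P} (hs : Pairwise (Disjoint on s))
    {σ c : ι → ℝ} (hσ : ∀ i, 0 < σ i) {κ : ℝ} (hκ : 0 ≤ κ) (hc : ∀ i, |c i| ≤ κ * σ i)
    {f g : P → ℝ} {ε : ℝ} (h : κ * ∑ p, |f p - g p| ≤ ε) :
    laplaceMech σ (fun i => c i * ∑ p ∈ s i, f p) ≤
      ENNReal.ofReal (Real.exp ε) • laplaceMech σ (fun i => c i * ∑ p ∈ s i, g p) := by
  have hcoord (i : ι) : |c i * ∑ p ∈ s i, f p - c i * ∑ p ∈ s i, g p| / σ i ≤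
      κ * ∑ p ∈ s i, |f p - g p| := by
    rw [div_le_iff₀ (hσ i), ← mul_sub, ← Finset.sum_sub_distrib, abs_mul, mul_right_comm]
    exact mul_le_mul (hc i) (Finset.abs_sum_le_sum_abs _ _) (abs_nonneg _)
      (mul_nonneg hκ (hσ i).le)
  refine laplaceMech_le hσ ?_
  calc ∑ i, |c i * ∑ p ∈ s i, f p - c i * ∑ p ∈ s i, g p| / σ i
      ≤ ∑ i, κ * ∑ p ∈ s i, |f p - g p| := Finset.sum_le_sum fun i _ => hcoord i
    _ = κ * ∑ i, ∑ p ∈ s i, |f p - g p| := (Finset.mul_sum _ _ _).symm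
    _ ≤ κ * ∑ p, |f p - g p| := by
      gcongr
      exact sum_sum_le_of_pairwise_disjoint hs fun p => abs_nonneg _
    _ ≤ ε := h

lemma sum_abs_sub_le_mul_of_mem_Icc {a b : ℝ} {f g : P → ℝ} (hf : ∀ p, f p ∈ Set.Icc a b)
    (hg : ∀ p, g p ∈ Set.Icc a b) :
    ∑ p, |f p - g p| ≤ (b - a) * {p | f p ≠ g p}.ncard := by
  classical
  calc ∑ p, |f p - g p| = ∑ p with f p ≠ g p, |f p - g p| :=
        (Finset.sum_filter_of_ne fun p _ hp => by rwa [ne_eq, abs_eq_zero, sub_eq_zero] at hp).symm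
    _ ≤ Finset.card {p | f p ≠ g p} • (b - a) :=
        Finset.sum_le_card_nsmul _ _ _ fun p _ => Real.dist_le_of_mem_Icc (hf p) (hg p)
    _ = (b - a) * {p | f p ≠ g p}.ncard := by
        rw [nsmul_eq_mul, mul_comm, ← Set.ncard_coe_finset, Finset.coe_filter_univ]

end WeightedSums

section Cells

open scoped Function

variable {G_R G_C n s_b : ℕ} {simple complex : Finset (Fin G_R × Fin G_C)}

lemma mem_grid {b : ℕ} {rc : Fin G_R × Fin G_C} {p : Fin (G_R * b) × Fin (G_C * b)} :
    p ∈ grid G_R G_C b rc ↔ p.1.val / b = rc.1 ∧ p.2.val / b = rc.2 := by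
  have hb : 0 < b := Nat.pos_of_mul_pos_left p.1.pos
  simp only [grid, Finset.mem_filter, Finset.mem_univ, true_and, Nat.div_eq_iff hb, Nat.succ_mul]
  omega

lemma mem_subgrid {rc : Fin G_R × Fin G_C} {uv : Fin n × Fin n}
    {p : Fin (G_R * (n * s_b)) × Fin (G_C * (n * s_b))} :
    p ∈ subgrid G_R G_C n s_b rc uv ↔
      p.1.val / s_b = rc.1 * n + uv.1 ∧ p.2.val / s_b = rc.2 * n + uv.2 := by
  have hs : 0 < s_b := Nat.pos_of_mul_pos_left (Nat.pos_of_mul_pos_left p.1.pos)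
  simp only [subgrid, Finset.mem_filter, Finset.mem_univ, true_and, Nat.div_eq_iff hs,
    Nat.succ_mul, Nat.add_mul, Nat.mul_assoc]
  omega

lemma grid_pairwise_disjoint (b : ℕ) : Pairwise (Disjoint on grid G_R G_C b) := by
  refine fun rc rc' hne => Finset.disjoint_left.2 fun p hp hp' => hne ?_
  rw [mem_grid] at hp hp'
  exact Prod.ext (Fin.ext (hp.1.symm.trans hp'.1)) (Fin.ext (hp.2.symm.trans hp'.2))

lemma subgrid_pairwise_disjoint (rc : Fin G_R × Fin G_C) :
    Pairwise (Disjoint on subgrid G_R G_C n s_b rc) := by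
  refine fun uv uv' hne => Finset.disjoint_left.2 fun p hp hp' => hne ?_
  rw [mem_subgrid] at hp hp'
  exact Prod.ext (Fin.ext (by omega)) (Fin.ext (by omega))

lemma subgrid_subset_grid (rc : Fin G_R × Fin G_C) (uv : Fin n × Fin n) :
    subgrid G_R G_C n s_b rc uv ⊆ grid G_R G_C (n * s_b) rc := by
  have div_eq {x r : ℕ} {u : Fin n} (h : x / s_b = r * n + u) : x / (n * s_b) = r := by
    rw [Nat.mul_comm, ← Nat.div_div_eq_div_mul, h, Nat.mul_comm, Nat.mul_add_div u.pos,
      Nat.div_eq_of_lt u.isLt, Nat.add_zero]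
  intro p hp
  rw [mem_subgrid] at hp
  exact mem_grid.2 ⟨div_eq hp.1, div_eq hp.2⟩

variable (G_R G_C n s_b simple complex) in
/-- The set of pixels averaged in each output coordinate of `regionAdaptiveMech`. -/
def cell : {rc // rc ∈ simple} ⊕ ({rc // rc ∈ complex} × (Fin n × Fin n)) →
    Finset (Fin (G_R * (n * s_b)) × Fin (G_C * (n * s_b))) :=
  Sum.elim (fun rc => grid G_R G_C (n * s_b) rc) (fun x => subgrid G_R G_C n s_b x.1 x.2)

lemma cell_pairwise_disjoint (hdisj : Disjoint simple complex) :
    Pairwise (Disjoint on cell G_R G_C n s_b simple complex) := by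
  have grid_subgrid {rc rc' : Fin G_R × Fin G_C} (hrc : rc ∈ simple) (hrc' : rc' ∈ complex)
      (uv : Fin n × Fin n) :
      Disjoint (grid G_R G_C (n * s_b) rc) (subgrid G_R G_C n s_b rc' uv) :=
    (grid_pairwise_disjoint _ (Finset.disjoint_iff_ne.1 hdisj rc hrc rc' hrc')).mono_right
      (subgrid_subset_grid rc' uv)
  rintro (⟨rc, hrc⟩ | ⟨⟨rc, hrc⟩, uv⟩) (⟨rc', hrc'⟩ | ⟨⟨rc', hrc'⟩, uv'⟩) hne
  · exact grid_pairwise_disjoint _ fun h => hne (by subst h; rfl)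
  · exact grid_subgrid hrc hrc' uv'
  · exact (grid_subgrid hrc' hrc uv).symm
  · obtain rfl | hrcne := eq_or_ne rc rc'
    · exact subgrid_pairwise_disjoint rc fun h => hne (by subst h; rfl)
    · exact (grid_pairwise_disjoint _ hrcne).mono (subgrid_subset_grid _ _)
        (subgrid_subset_grid _ _)

lemma regionAdaptiveMech_eq_laplaceMech (σ σs : ℝ)
    (I : Fin (G_R * (n * s_b)) × Fin (G_C * (n * s_b)) → ℝ) :
    regionAdaptiveMech G_R G_C n s_b σ σs simple complex I =
      laplaceMech (Sum.elim (fun _ => σ) fun _ => σs) fun i =>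
        Sum.elim (fun _ => 1 / ((n * s_b : ℕ) : ℝ) ^ 2) (fun _ => 1 / (s_b : ℝ) ^ 2) i *
          ∑ p ∈ cell G_R G_C n s_b simple complex i, I p := by
  unfold regionAdaptiveMech laplaceMech
  congr 1 with i : 1
  cases i <;> rfl

end Cells

theorem stmt_15_general {G_R G_C n s_b : ℕ} (hn : 0 < n) (hs : 0 < s_b) {Δ ε : ℝ} (hΔ : 0 < Δ)
    (hε : 0 < ε) {simple complex : Finset (Fin G_R × Fin G_C)} (hdisj : Disjoint simple complex)
    {σ σs : ℝ} (hσ : Δ / (((n : ℝ) * s_b) ^ 2 * ε) ≤ σ) (hσs : Δ / ((s_b : ℝ) ^ 2 * ε) ≤ σs)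
    {I₁ I₂ : Fin (G_R * (n * s_b)) × Fin (G_C * (n * s_b)) → ℝ}
    (hI : ∑ q, |I₁ q - I₂ q| ≤ Δ) :
    regionAdaptiveMech G_R G_C n s_b σ σs simple complex I₁ ≤
      ENNReal.ofReal (Real.exp ε) •
        regionAdaptiveMech G_R G_C n s_b σ σs simple complex I₂ := by
  have weight_le {k τ : ℝ} (hk : 0 < k) (hτ : Δ / (k ^ 2 * ε) ≤ τ) :
      |1 / k ^ 2| ≤ ε / Δ * τ := by
    rw [abs_of_pos (by positivity)]
    calc 1 / k ^ 2 = ε / Δ * (Δ / (k ^ 2 * ε)) := by field_simp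
      _ ≤ ε / Δ * τ := by gcongr
  have hexp : ε / Δ * ∑ q, |I₁ q - I₂ q| ≤ ε :=
    calc _ ≤ ε / Δ * Δ := by gcongr
      _ = ε := div_mul_cancel₀ ε hΔ.ne'
  simp only [regionAdaptiveMech_eq_laplaceMech, Nat.cast_mul]
  refine laplaceMech_weightedSum_le (cell_pairwise_disjoint hdisj) ?_ (κ := ε / Δ)
    (by positivity) ?_ hexp
  · rintro (_ | _)
    · exact lt_of_lt_of_le (by positivity) hσ
    · exact lt_of_lt_of_le (by positivity) hσs
  · rintro (_ | _)
    · exact weight_le (by positivity) hσ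
    · exact weight_le (by positivity) hσs

/-- Privacy of region-adaptive pixelization: with Laplace scales
`σ = 255·m/(b²·ε)` on simple grids (`b = n·s_b`) and `σ_s = 255·m/(s_b²·ε)` on
complex subgrids, all noises independent, the mechanism satisfies
`ε`-differential privacy with respect to the `m`-neighboring relation on
`[0,255]`-valued images. -/
theorem stmt_15 (G_R G_C n s_b m : ℕ) (hn : 1 ≤ n) (hs : 0 < s_b) (hm : 1 ≤ m)
    (ε : ℝ) (hε : 0 < ε)
    (simple complex : Finset (Fin G_R × Fin G_C))
    (hpart : ∀ rc, rc ∈ simple ↔ rc ∉ complex)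
    (σ σs : ℝ)
    (hσ : σ = 255 * m / (((n : ℝ) * s_b) ^ 2 * ε))
    (hσs : σs = 255 * m / ((s_b : ℝ) ^ 2 * ε))
    (I₁ I₂ : Fin (G_R * (n * s_b)) × Fin (G_C * (n * s_b)) → ℝ)
    (hI₁ : ∀ q, I₁ q ∈ Set.Icc (0 : ℝ) 255) (hI₂ : ∀ q, I₂ q ∈ Set.Icc (0 : ℝ) 255)
    (hdiff : {q | I₁ q ≠ I₂ q}.ncard ≤ m)
    (S : Set (({rc // rc ∈ simple} ⊕ ({rc // rc ∈ complex} × (Fin n × Fin n))) → ℝ))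
    (hS : MeasurableSet S) :
    regionAdaptiveMech G_R G_C n s_b σ σs simple complex I₁ S ≤
      ENNReal.ofReal (Real.exp ε) *
        regionAdaptiveMech G_R G_C n s_b σ σs simple complex I₂ S := by
  refine stmt_15_general hn hs (by positivity) hε ?_ hσ.ge hσs.ge ?_ S
  · exact Finset.disjoint_left.2 fun rc => (hpart rc).1
  · exact (sum_abs_sub_le_mul_of_mem_Icc hI₁ hI₂).trans (by rw [sub_zero]; gcongr)
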